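/- arXiv:1312.3679 — 2 statements merged into one kernel-verified Lean document; each statement's English description precedes it below -/
import Mathlib

section
/- Let D be a semisimple x-monotone drawing of K_n and let k be an integer with 0 ≤ k ≤ (n−3)/2. For every i ∈ {1, 2, ..., k+1}, each of the k+2−i bottommost and each of the k+2−i topmost right edges at v_i is an m-edge of D for some m ≤ k; moreover, at least k+2−i of these edges are (D,D')-invariant ≤k-edges, where D' is the x-monotone drawing of K_{n−1} obtained from D by deleting v_n and its incident edges. -/
/-- `Zval n` is Hill's conjectured value
`Z(n) = (1/4)⌊n/2⌋⌊(n−1)/2⌋⌊(n−2)/2⌋⌊(n−3)/2⌋` for the crossing number of `K n`.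
(The product of the four floors is always divisible by 4, so natural division is exact.) -/
def Zval (n : ℕ) : ℕ :=
  n / 2 * ((n - 1) / 2) * ((n - 2) / 2) * ((n - 3) / 2) / 4

/-- An x-monotone drawing of the complete graph `K n`: vertices `v i = (x i, 0)` with
`x` strictly increasing, and for each pair `i < j` a continuous function `e i j` on
`[x i, x j]` vanishing at the endpoints, whose graph is the arc of the edge `{i, j}`.
Edges avoid the intermediate vertices, any two distinct edges meet in finitely many
interior parameters, and at each such common point the difference changes sign
(a proper crossing). -/
structure XMonotoneDrawing (n : ℕ) where
  x : Fin n → ℝ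
  x_strictMono : StrictMono x
  e : Fin n → Fin n → ℝ → ℝ
  cont : ∀ i j : Fin n, i < j → ContinuousOn (e i j) (Set.Icc (x i) (x j))
  end_left : ∀ i j : Fin n, i < j → e i j (x i) = 0
  end_right : ∀ i j : Fin n, i < j → e i j (x j) = 0
  avoid_vertex : ∀ i m j : Fin n, i < m → m < j → e i j (x m) ≠ 0
  cross_finite : ∀ i j k l : Fin n, i < j → k < l → (i, j) ≠ (k, l) →
    {t : ℝ | max (x i) (x k) < t ∧ t < min (x j) (x l) ∧ e i j t = e k l t}.Finite
  sign_change : ∀ i j k l : Fin n, i < j → k < l → (i, j) ≠ (k, l) →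
    ∀ t : ℝ, max (x i) (x k) < t → t < min (x j) (x l) → e i j t = e k l t →
      ∃ ε > (0 : ℝ), ∀ s : ℝ, max (x i) (x k) < s → t - ε < s → s < t →
        ∀ u : ℝ, u < min (x j) (x l) → t < u → u < t + ε →
          (e i j s - e k l s) * (e i j u - e k l u) < 0

namespace XMonotoneDrawing

variable {n : ℕ}

/-- The set of parameters at which the edges `{i,j}` and `{k,l}` cross
(both edges are parametrized over the `x`-axis). -/
def crossSet (D : XMonotoneDrawing n) (i j k l : Fin n) : Set ℝ :=
  {t : ℝ | max (D.x i) (D.x k) < t ∧ t < min (D.x j) (D.x l) ∧ D.e i j t = D.e k l t}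

/-- The number of crossings between the edges `{i,j}` and `{k,l}`. -/
noncomputable def crossCount (D : XMonotoneDrawing n) (i j k l : Fin n) : ℕ :=
  (D.crossSet i j k l).ncard

/-- Two edges `{i,j}` and `{k,l}` are adjacent if they share an endpoint index. -/
def Adj (i j k l : Fin n) : Prop := i = k ∨ i = l ∨ j = k ∨ j = l

/-- A drawing is semisimple if no two adjacent edges cross. -/
def Semisimple (D : XMonotoneDrawing n) : Prop :=
  ∀ i j k l : Fin n, i < j → k < l → (i, j) ≠ (k, l) → Adj i j k l →
    D.crossCount i j k l = 0

/-- A drawing is weakly semisimple if every two adjacent edges cross an even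
number of times. -/
def WeaklySemisimple (D : XMonotoneDrawing n) : Prop :=
  ∀ i j k l : Fin n, i < j → k < l → (i, j) ≠ (k, l) → Adj i j k l →
    Even (D.crossCount i j k l)

/-- A drawing is simple if no two adjacent edges cross and every two non-adjacent
edges cross at most once. -/
def Simple (D : XMonotoneDrawing n) : Prop :=
  ∀ i j k l : Fin n, i < j → k < l → (i, j) ≠ (k, l) →
    (Adj i j k l → D.crossCount i j k l = 0) ∧
    (¬ Adj i j k l → D.crossCount i j k l ≤ 1)

/-- `cr D`: the total number of crossings of `D`. (Each unordered pair of distinct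
edges is counted twice in the sum, whence the division by 2; `crossCount` is
symmetric in the two edges.) -/
noncomputable def cr (D : XMonotoneDrawing n) : ℕ :=
  (∑ p : (Fin n × Fin n) × (Fin n × Fin n),
      if p.1.1 < p.1.2 ∧ p.2.1 < p.2.2 ∧ p.1 ≠ p.2 then
        D.crossCount p.1.1 p.1.2 p.2.1 p.2.2
      else 0) / 2

/-- `ocr D`: the number of unordered pairs of edges of `D` crossing an odd number
of times. (Each unordered pair appears twice as an ordered pair.) -/
noncomputable def ocr (D : XMonotoneDrawing n) : ℕ :=
  {p : (Fin n × Fin n) × (Fin n × Fin n) |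
    p.1.1 < p.1.2 ∧ p.2.1 < p.2.2 ∧ p.1 ≠ p.2 ∧
      Odd (D.crossCount p.1.1 p.1.2 p.2.1 p.2.2)}.ncard / 2

/-- The signature of the triple `i < j < k`: `true` (i.e. `+`) if the vertex `v j`
lies below the edge `{i, k}`, i.e. `e i k (x j) > 0`, and `false` (i.e. `−`) otherwise. -/
noncomputable def sig (D : XMonotoneDrawing n) (i j k : Fin n) : Bool :=
  if 0 < D.e i k (D.x j) then true else false

/-- `D` realizes the signature function `σ` if `σ_D` and `σ` agree on all
increasing triples. -/
def Realizes (D : XMonotoneDrawing n) (σ : Fin n → Fin n → Fin n → Bool) : Prop :=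
  ∀ i j k : Fin n, i < j → j < k → D.sig i j k = σ i j k

/-- A drawing is pseudolinear if its edges extend to continuous curves over all of `ℝ`
that avoid all vertices other than their endpoints and such that any two of these
extended curves cross exactly once (the crossing being a sign change of the difference). -/
def Pseudolinear (D : XMonotoneDrawing n) : Prop :=
  ∃ p : Fin n → Fin n → ℝ → ℝ,
    (∀ i j : Fin n, i < j → Continuous (p i j)) ∧
    (∀ i j : Fin n, i < j → ∀ t ∈ Set.Icc (D.x i) (D.x j), p i j t = D.e i j t) ∧
    (∀ i j m : Fin n, i < j → m ≠ i → m ≠ j → p i j (D.x m) ≠ 0) ∧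
    (∀ i j k l : Fin n, i < j → k < l → (i, j) ≠ (k, l) →
      ∃ t : ℝ, p i j t = p k l t ∧
        ∀ s u : ℝ, s < t → t < u →
          (p i j s - p k l s) * (p i j u - p k l u) < 0)

/-- The arc of the edge `{i, j}` as a subset of the plane `ℝ × ℝ`. -/
def edgeArc (D : XMonotoneDrawing n) (i j : Fin n) : Set (ℝ × ℝ) :=
  {q : ℝ × ℝ | D.x i ≤ q.1 ∧ q.1 ≤ D.x j ∧ q.2 = D.e i j q.1}

/-- The union of all edge arcs of the drawing. -/
def arcUnion (D : XMonotoneDrawing n) : Set (ℝ × ℝ) :=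
  ⋃ i : Fin n, ⋃ j : Fin n, ⋃ (_ : i < j), D.edgeArc i j

end XMonotoneDrawing

namespace Sig

variable {n : ℕ}

/-- With respect to a signature function `σ`, the vertex `m ∉ {i, j}` is on the left of
the directed edge `(i, j)` (where `i < j`). -/
def LeftOf (σ : Fin n → Fin n → Fin n → Bool) (i j m : Fin n) : Prop :=
  (i < m ∧ m < j ∧ σ i m j = false) ∨ (m < i ∧ σ m i j = true) ∨ (j < m ∧ σ i j m = true)

/-- The number of vertices on the left of the directed edge `(i, j)`. -/
noncomputable def leftCount (σ : Fin n → Fin n → Fin n → Bool) (i j : Fin n) : ℕ :=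
  {m : Fin n | LeftOf σ i j m}.ncard

/-- The edge `{i, j}` (with `i < j`) is a `k`-edge of `σ` if `min(ℓ, n − 2 − ℓ) = k`,
where `ℓ` is the number of vertices on its left. -/
def IsKEdge (σ : Fin n → Fin n → Fin n → Bool) (k : ℕ) (i j : Fin n) : Prop :=
  min (leftCount σ i j) (n - 2 - leftCount σ i j) = k

/-- `Ek σ k`: the number of `k`-edges of `σ`. -/
noncomputable def Ek (σ : Fin n → Fin n → Fin n → Bool) (k : ℕ) : ℕ :=
  {p : Fin n × Fin n | p.1 < p.2 ∧ IsKEdge σ k p.1 p.2}.ncard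

/-- `Ele σ k = E_{≤k}(σ)`: the number of `≤k`-edges of `σ`. -/
noncomputable def Ele (σ : Fin n → Fin n → Fin n → Bool) (k : ℕ) : ℕ :=
  ∑ i ∈ Finset.range (k + 1), Ek σ i

/-- `Elele σ k = E_{≤≤k}(σ) = Σ_{j=0}^{k} E_{≤j}(σ)`. -/
noncomputable def Elele (σ : Fin n → Fin n → Fin n → Bool) (k : ℕ) : ℕ :=
  ∑ j ∈ Finset.range (k + 1), Ele σ j

/-- `E_{≤≤k}` with an integer index, which vanishes for negative `k`. -/
noncomputable def ElelZ (σ : Fin n → Fin n → Fin n → Bool) (k : ℤ) : ℕ :=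
  if 0 ≤ k then Elele σ k.toNat else 0

/-- The left count of the edge `{i, j}` in the drawing restricted to the first
`n − 1` vertices (the last vertex deleted). -/
noncomputable def leftCountRes (σ : Fin n → Fin n → Fin n → Bool) (i j : Fin n) : ℕ :=
  {m : Fin n | LeftOf σ i j m ∧ (m : ℕ) + 1 < n}.ncard

/-- The edge `{i, j}` is a `k`-edge of the restriction of `σ` to the first `n − 1`
vertices (there `min(ℓ', (n−1) − 2 − ℓ') = k`). -/
def IsKEdgeRes (σ : Fin n → Fin n → Fin n → Bool) (k : ℕ) (i j : Fin n) : Prop :=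
  min (leftCountRes σ i j) (n - 3 - leftCountRes σ i j) = k

/-- The edge `{i, j}` is a `(D,D')`-invariant `≤k`-edge: it avoids the last vertex and
is an `m`-edge with `m ≤ k` both in `σ` and in the restriction of `σ` to the first
`n − 1` vertices. -/
def InvariantLeK (σ : Fin n → Fin n → Fin n → Bool) (k : ℕ) (i j : Fin n) : Prop :=
  (j : ℕ) + 1 < n ∧ (∃ m ≤ k, IsKEdge σ m i j) ∧ (∃ m ≤ k, IsKEdgeRes σ m i j)

/-- The ten 4-tuple forms allowed in signature functions of semisimple x-monotone
drawings: `++++, −−−−, ++−−, −−++, −++−, +−−+, −−−+, +++−, +−−−, −+++`. -/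
def AllowedForm (a b c d : Bool) : Prop :=
  (a, b, c, d) ∈ ([(true, true, true, true), (false, false, false, false),
    (true, true, false, false), (false, false, true, true),
    (false, true, true, false), (true, false, false, true),
    (false, false, false, true), (true, true, true, false),
    (true, false, false, false), (false, true, true, true)] :
      List (Bool × Bool × Bool × Bool))

/-- A signature function is admissible if every increasing 4-tuple is of one of the
ten allowed forms. -/
def Admissible (σ : Fin n → Fin n → Fin n → Bool) : Prop :=
  ∀ a b c d : Fin n, a < b → b < c → c < d →
    AllowedForm (σ a b c) (σ a b d) (σ a c d) (σ b c d)

/-- The six convex forms: `++++, −−−−, ++−−, −−++, −++−, +−−+`. -/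
def ConvexForm (a b c d : Bool) : Prop :=
  (a, b, c, d) ∈ ([(true, true, true, true), (false, false, false, false),
    (true, true, false, false), (false, false, true, true),
    (false, true, true, false), (true, false, false, true)] :
      List (Bool × Bool × Bool × Bool))

/-- The 4-tuple `a < b < c < d` is convex in `σ`. -/
def Convex4 (σ : Fin n → Fin n → Fin n → Bool) (a b c d : Fin n) : Prop :=
  ConvexForm (σ a b c) (σ a b d) (σ a c d) (σ b c d)

/-- The eight 4-tuple forms of pseudolinear x-monotone drawings (the sign-monotone
sequences): `++++, +++−, ++−−, +−−−, −−−−, −−−+, −−++, −+++`. -/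
def PLForm (a b c d : Bool) : Prop :=
  (a, b, c, d) ∈ ([(true, true, true, true), (true, true, true, false),
    (true, true, false, false), (true, false, false, false),
    (false, false, false, false), (false, false, false, true),
    (false, false, true, true), (false, true, true, true)] :
      List (Bool × Bool × Bool × Bool))

/-- The relation `j ⋖ k` on `{j : i < j}`: `j ⋖ k` iff (`j < k` and `σ i j k = +`)
or (`k < j` and `σ i k j = −`). -/
def Below (σ : Fin n → Fin n → Fin n → Bool) (i j k : Fin n) : Prop :=
  (j < k ∧ σ i j k = true) ∨ (k < j ∧ σ i k j = false)

end Sig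

/-!
Whether a vertex to the right of `v i` lies on the left of the edge `{i, j}` is decided by the
vertical order in which the right edges at `v i` leave `v i`: semisimplicity preserves the order of
two right edges up to the nearer of their right endpoints, where it is recorded by the signature.
Hence an edge `{i, j}` with `a` right edges above it has between `a` and `a + i` vertices on its
left (0-based `i`), and symmetrically on its right, which makes the extremal right edges
`≤k`-edges. Deleting `v n` cannot turn a `≤k`-edge avoiding it into an edge that is not one, so it
remains to see that enough extremal right edges avoid `v n`. If `{i, n}` is not topmost, the topmost
edges do; if it is not bottommost, the bottommost ones do; if it is both, all right edges are
extremal.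
-/

lemma sign_eq_sign_of_isPreconnected {X β : Type*} [TopologicalSpace X] [TopologicalSpace β]
    [Zero β] [LinearOrder β] [OrderTopology β] {s : Set X} (hs : IsPreconnected s) {g : X → β}
    (hg : ContinuousOn g s) (hne : ∀ x ∈ s, g x ≠ 0) {x y : X} (hx : x ∈ s) (hy : y ∈ s) :
    SignType.sign (g x) = SignType.sign (g y) :=
  hs.constant (f := SignType.sign ∘ g)
    (fun z hz ↦ (continuousAt_sign_of_ne_zero (hne z hz)).comp_continuousWithinAt (hg z hz)) hx hy

section Extremal

variable {ι α : Type*} [LinearOrder α]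

/-- The `r` topmost elements of `S` with respect to the heights `f`, encoded as those with fewer
than `r` elements of `S` strictly above them (so ties may produce more than `r` elements). -/
def topmost (S : Set ι) (f : ι → α) (r : ℕ) : Set ι :=
  {j | j ∈ S ∧ {m | m ∈ S ∧ f j < f m}.ncard < r}

/-- The `r` bottommost elements of `S` with respect to the heights `f`; the order dual of
`topmost`. -/
def bottommost (S : Set ι) (f : ι → α) (r : ℕ) : Set ι :=
  {j | j ∈ S ∧ {m | m ∈ S ∧ f m < f j}.ncard < r}

variable {S : Set ι} {f : ι → α} {r : ℕ} {j w : ι}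

lemma mem_topmost_of_le (hS : S.Finite) (hw : w ∈ topmost S f r) (hj : j ∈ S) (h : f w ≤ f j) :
    j ∈ topmost S f r :=
  have hsub : {m | m ∈ S ∧ f j < f m} ⊆ {m | m ∈ S ∧ f w < f m} := fun _ hm ↦
    ⟨hm.1, h.trans_lt hm.2⟩
  ⟨hj, (Set.ncard_le_ncard hsub (hS.subset fun _ hm ↦ hm.1)).trans_lt hw.2⟩

lemma mem_bottommost_of_le (hS : S.Finite) (hw : w ∈ bottommost S f r) (hj : j ∈ S)
    (h : f j ≤ f w) : j ∈ bottommost S f r :=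
  mem_topmost_of_le (f := OrderDual.toDual ∘ f) hS hw hj h

lemma le_ncard_topmost (hS : S.Finite) (f : ι → α) (hr : r ≤ S.ncard) :
    r ≤ (topmost S f r).ncard := by
  have hfin : (topmost S f r).Finite := hS.subset fun _ hj ↦ hj.1
  by_contra! hlt
  obtain ⟨j₀, hj₀⟩ := Set.exists_mem_notMem_of_ncard_lt_ncard (hlt.trans_le hr) hfin
  obtain ⟨j, ⟨hjS, hj⟩, hmax⟩ := Set.exists_max_image (S \ topmost S f r) f hS.sdiff ⟨j₀, hj₀⟩
  refine hj ⟨hjS, (Set.ncard_le_ncard (fun m hm ↦ ?_) hfin).trans_lt hlt⟩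
  by_contra hm'
  exact (hmax m ⟨hm.1, hm'⟩).not_gt hm.2

lemma le_ncard_bottommost (hS : S.Finite) (f : ι → α) (hr : r ≤ S.ncard) :
    r ≤ (bottommost S f r).ncard :=
  le_ncard_topmost hS (OrderDual.toDual ∘ f) hr

lemma le_ncard_topmost_union_bottommost_sdiff_singleton (hS : S.Finite) (f : ι → α) (w : ι)
    (hr : r < S.ncard) : r ≤ ((topmost S f r ∪ bottommost S f r) \ {w}).ncard := by
  have hfin : ((topmost S f r ∪ bottommost S f r) \ {w}).Finite :=
    hS.subset fun _ hj ↦ hj.1.elim And.left And.left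
  by_cases htop : w ∈ topmost S f r
  · by_cases hbot : w ∈ bottommost S f r
    · have hsub : S \ {w} ⊆ (topmost S f r ∪ bottommost S f r) \ {w} := fun j hj ↦
        ⟨(le_total (f w) (f j)).imp (mem_topmost_of_le hS htop hj.1)
          (mem_bottommost_of_le hS hbot hj.1), hj.2⟩
      calc r ≤ S.ncard - 1 := Nat.le_sub_one_of_lt hr
        _ ≤ (S \ {w}).ncard := Set.pred_ncard_le_ncard_sdiff_singleton S w
        _ ≤ _ := Set.ncard_le_ncard hsub hfin
    · exact (le_ncard_bottommost hS f hr.le).trans <| Set.ncard_le_ncard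
        (Set.subset_sdiff_singleton Set.subset_union_right hbot) hfin
  · exact (le_ncard_topmost hS f hr.le).trans <| Set.ncard_le_ncard
      (Set.subset_sdiff_singleton Set.subset_union_left htop) hfin

lemma ncard_above_add_ncard_below_add_one (hS : S.Finite) (hf : Set.InjOn f S) (hj : j ∈ S) :
    {m | m ∈ S ∧ f j < f m}.ncard + {m | m ∈ S ∧ f m < f j}.ncard + 1 = S.ncard := by
  have habove : {m | m ∈ S ∧ f j < f m}.Finite := hS.subset fun _ hm ↦ hm.1
  have hbelow : {m | m ∈ S ∧ f m < f j}.Finite := hS.subset fun _ hm ↦ hm.1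
  have hdisj : Disjoint {m | m ∈ S ∧ f j < f m} {m | m ∈ S ∧ f m < f j} :=
    Set.disjoint_left.2 fun _ h h' ↦ h.2.asymm h'.2
  have hunion : {m | m ∈ S ∧ f j < f m} ∪ {m | m ∈ S ∧ f m < f j} = S \ {j} := by
    ext m
    constructor
    · rintro (⟨hm, h⟩ | ⟨hm, h⟩)
      · exact ⟨hm, fun hmj ↦ h.ne' (congrArg f hmj)⟩
      · exact ⟨hm, fun hmj ↦ h.ne (congrArg f hmj)⟩
    · rintro ⟨hm, hmj⟩
      exact (lt_or_gt_of_ne (hf.ne hj hm (Ne.symm hmj))).imp (⟨hm, ·⟩) (⟨hm, ·⟩)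
  rw [← Set.ncard_union_eq hdisj habove hbelow, hunion, Set.ncard_sdiff_singleton_add_one hj hS]

end Extremal

namespace Sig

variable {n : ℕ} {σ : Fin n → Fin n → Fin n → Bool} {i j m : Fin n} {k : ℕ}

lemma exists_isKEdge_le_iff :
    (∃ l ≤ k, IsKEdge σ l i j) ↔ leftCount σ i j ≤ k ∨ n - 2 - leftCount σ i j ≤ k := by
  simp [IsKEdge]

lemma exists_isKEdgeRes_le_iff :
    (∃ l ≤ k, IsKEdgeRes σ l i j) ↔
      leftCountRes σ i j ≤ k ∨ n - 3 - leftCountRes σ i j ≤ k := by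
  simp [IsKEdgeRes]

lemma leftCountRes_le_leftCount : leftCountRes σ i j ≤ leftCount σ i j :=
  Set.ncard_le_ncard fun _ h ↦ h.1

lemma leftCount_le_leftCountRes_add_one : leftCount σ i j ≤ leftCountRes σ i j + 1 := by
  obtain ⟨n, rfl⟩ := Nat.exists_eq_succ_of_ne_zero i.pos.ne'
  have hsub : {m | LeftOf σ i j m} \ {Fin.last n} ⊆
      {m | LeftOf σ i j m ∧ (m : ℕ) + 1 < n + 1} := fun m hm ↦
    ⟨hm.1, Nat.succ_lt_succ (Fin.val_lt_last hm.2)⟩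
  exact Nat.le_add_of_sub_le <|
    (Set.pred_ncard_le_ncard_sdiff_singleton _ (Fin.last n)).trans (Set.ncard_le_ncard hsub)

lemma invariantLeK_iff :
    InvariantLeK σ k i j ↔ (j : ℕ) + 1 < n ∧ ∃ l ≤ k, IsKEdge σ l i j := by
  refine ⟨fun h ↦ ⟨h.1, h.2.1⟩, fun ⟨hj, h⟩ ↦ ⟨hj, h, ?_⟩⟩
  rw [exists_isKEdge_le_iff] at h
  rw [exists_isKEdgeRes_le_iff]
  have hle := leftCountRes_le_leftCount (σ := σ) (i := i) (j := j)
  have hge := leftCount_le_leftCountRes_add_one (σ := σ) (i := i) (j := j)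
  omega

lemma leftOf_iff_below (him : i < m) : LeftOf σ i j m ↔ Below σ i j m := by
  simp [LeftOf, Below, him, him.not_gt, or_comm]

lemma below_or_below (hjm : j ≠ m) : Below σ i j m ∨ Below σ i m j := by
  rcases hjm.lt_or_gt with h | h
  · cases hσ : σ i j m <;> simp [Below, h, hσ]
  · cases hσ : σ i m j <;> simp [Below, h, hσ]

variable {α : Type*} [LinearOrder α] {f : Fin n → α}

/-- The heights `f` realize the relation `⋖` on the right edges at `v i`: `f j` is the height at
which the edge `{i, j}` leaves `v i`. As any two right edges are comparable under `⋖`, one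
implication suffices. -/
def OrdersRightEdges (σ : Fin n → Fin n → Fin n → Bool) (i : Fin n) (f : Fin n → α) : Prop :=
  ∀ ⦃j m : Fin n⦄, i < j → i < m → Below σ i j m → f j < f m

namespace OrdersRightEdges

lemma injOn (hf : OrdersRightEdges σ i f) : Set.InjOn f (Set.Ioi i) := by
  intro j hj m hm h
  by_contra hjm
  rcases below_or_below (σ := σ) (i := i) hjm with hb | hb
  · exact (hf hj hm hb).ne h
  · exact (hf hm hj hb).ne' h

lemma leftOf_iff (hf : OrdersRightEdges σ i f) (hij : i < j) (him : i < m) :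
    LeftOf σ i j m ↔ f j < f m := by
  rw [leftOf_iff_below him]
  refine ⟨hf hij him, fun h ↦ ?_⟩
  have hjm : j ≠ m := fun hjm ↦ h.ne (congrArg f hjm)
  exact (below_or_below hjm).resolve_right fun hb ↦ h.asymm (hf him hij hb)

lemma ncard_above_le_leftCount (hf : OrdersRightEdges σ i f) (hij : i < j) :
    {m | m ∈ Set.Ioi i ∧ f j < f m}.ncard ≤ leftCount σ i j :=
  Set.ncard_le_ncard fun _ hm ↦ (hf.leftOf_iff hij hm.1).2 hm.2

lemma leftCount_le (hf : OrdersRightEdges σ i f) (hij : i < j) :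
    leftCount σ i j ≤ {m | m ∈ Set.Ioi i ∧ f j < f m}.ncard + i := by
  have hsub : {m | LeftOf σ i j m} ⊆ {m | m ∈ Set.Ioi i ∧ f j < f m} ∪ Set.Iio i := by
    intro m hm
    rcases lt_trichotomy m i with h | rfl | h
    · exact Or.inr h
    · simp [LeftOf, hij.not_gt] at hm
    · exact Or.inl ⟨h, (hf.leftOf_iff hij h).1 hm⟩
  calc leftCount σ i j ≤ _ := Set.ncard_le_ncard hsub
    _ ≤ _ := Set.ncard_union_le _ _
    _ = _ := by simp [Set.ncard_eq_toFinset_card']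

lemma exists_isKEdge_le (hf : OrdersRightEdges σ i f) {r : ℕ} (hr : (i : ℕ) + r ≤ k + 1)
    (hj : j ∈ topmost (Set.Ioi i) f r ∪ bottommost (Set.Ioi i) f r) :
    ∃ l ≤ k, IsKEdge σ l i j := by
  have hij : i < j := hj.elim And.left And.left
  have hcard : (Set.Ioi i).ncard = n - 1 - i := by simp [Set.ncard_eq_toFinset_card']
  have hsum := ncard_above_add_ncard_below_add_one (Set.toFinite _) hf.injOn hij
  have hle := hf.leftCount_le hij
  have hge := hf.ncard_above_le_leftCount hij
  rw [exists_isKEdge_le_iff]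
  rcases hj with ⟨-, habove⟩ | ⟨-, hbelow⟩
  · left; omega
  · right; omega

end OrdersRightEdges

end Sig

namespace XMonotoneDrawing

variable {n : ℕ} {D : XMonotoneDrawing n} {i j m : Fin n} {t : ℝ}

lemma Semisimple.crossSet_eq_empty_of_right_edges (hD : D.Semisimple) (hij : i < j) (him : i < m)
    (hjm : j ≠ m) : D.crossSet i j i m = ∅ :=
  have hne : (i, j) ≠ (i, m) := fun h ↦ hjm (congrArg Prod.snd h)
  (Set.ncard_eq_zero (D.cross_finite i j i m hij him hne)).1
    (hD i j i m hij him hne (Or.inl rfl))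

/-- The difference of the two edges has no zero on `(x i, x j]`, since they do not cross and
`{i, m}` avoids `v j`. -/
lemma sign_sub_eq_sign_of_crossSet_eq_empty (hcross : D.crossSet i j i m = ∅) (hij : i < j)
    (hjm : j < m) (ht : t ∈ Set.Ioo (D.x i) (D.x j)) :
    SignType.sign (D.e i m t - D.e i j t) = SignType.sign (D.e i m (D.x j)) := by
  have hx : D.x j < D.x m := D.x_strictMono hjm
  have hcont : ContinuousOn (fun s ↦ D.e i m s - D.e i j s) (Set.Ioc (D.x i) (D.x j)) :=
    ((D.cont i m (hij.trans hjm)).mono fun s hs ↦ ⟨hs.1.le, hs.2.trans hx.le⟩).sub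
      ((D.cont i j hij).mono Set.Ioc_subset_Icc_self)
  have hne : ∀ s ∈ Set.Ioc (D.x i) (D.x j), D.e i m s - D.e i j s ≠ 0 := by
    rintro s ⟨his, hsj⟩
    rcases hsj.lt_or_eq with hsj | rfl
    · refine sub_ne_zero.2 fun h ↦ Set.eq_empty_iff_forall_notMem.1 hcross s ?_
      exact ⟨max_lt his his, lt_min hsj (hsj.trans hx), h.symm⟩
    · simpa only [D.end_right i j hij, sub_zero] using D.avoid_vertex i j m hij hjm
  have heq := sign_eq_sign_of_isPreconnected isPreconnected_Ioc hcont hne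
    ⟨ht.1, ht.2.le⟩ ⟨ht.1.trans ht.2, le_rfl⟩
  simpa only [D.end_right i j hij, sub_zero] using heq

lemma ordersRightEdges_of_crossSet_eq_empty
    (hcross : ∀ j m : Fin n, i < j → j < m → D.crossSet i j i m = ∅)
    (ht₁ : D.x i < t) (ht₂ : ∀ m : Fin n, i < m → t < D.x m) :
    Sig.OrdersRightEdges D.sig i (fun j ↦ D.e i j t) := by
  rintro j m hij him (⟨hjm, hσ⟩ | ⟨hmj, hσ⟩)
  · have hpos : 0 < D.e i m (D.x j) := by simpa [sig] using hσ
    have hsign := sign_sub_eq_sign_of_crossSet_eq_empty (hcross j m hij hjm) hij hjm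
      ⟨ht₁, ht₂ j hij⟩
    rwa [sign_pos hpos, sign_eq_one_iff, sub_pos] at hsign
  · have hneg : D.e i j (D.x m) < 0 :=
      (D.avoid_vertex i m j him hmj).lt_of_le (by simpa [sig] using hσ)
    have hsign := sign_sub_eq_sign_of_crossSet_eq_empty (hcross m j him hmj) him hmj
      ⟨ht₁, ht₂ m him⟩
    rwa [sign_neg hneg, sign_eq_neg_one_iff, sub_neg] at hsign

end XMonotoneDrawing

theorem topmost_bottommost_right_edges_are_le_k_edges_general {α : Type*} [LinearOrder α] {n : ℕ}
    {σ : Fin n → Fin n → Fin n → Bool} {i : Fin n} {f : Fin n → α}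
    (hf : Sig.OrdersRightEdges σ i f) {k r : ℕ} (hk : (i : ℕ) + r ≤ k + 1)
    (hn : (i : ℕ) + r + 2 ≤ n) :
    (∀ j ∈ topmost (Set.Ioi i) f r ∪ bottommost (Set.Ioi i) f r, ∃ m ≤ k, Sig.IsKEdge σ m i j) ∧
      r ≤ {j | j ∈ topmost (Set.Ioi i) f r ∪ bottommost (Set.Ioi i) f r ∧
        Sig.InvariantLeK σ k i j}.ncard := by
  refine ⟨fun j hj ↦ hf.exists_isKEdge_le hk hj, ?_⟩
  let last : Fin n := ⟨n - 1, by omega⟩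
  have hcard : r < (Set.Ioi i).ncard := by simp [Set.ncard_eq_toFinset_card']; omega
  refine (le_ncard_topmost_union_bottommost_sdiff_singleton (Set.toFinite _) f last hcard).trans
    (Set.ncard_le_ncard ?_)
  rintro j ⟨hj, hjlast⟩
  have hjn : (j : ℕ) + 1 < n := by
    have hne : (j : ℕ) ≠ n - 1 := fun h ↦ hjlast (Fin.ext h)
    omega
  exact ⟨hj, Sig.invariantLeK_iff.2 ⟨hjn, hf.exists_isKEdge_le hk hj⟩⟩

/-- Let `D` be a semisimple x-monotone drawing of `K n` and let `k` be
an integer with `0 ≤ k ≤ (n−3)/2` (i.e. `2k + 3 ≤ n`). For every vertex `i` among the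
first `k+1` vertices (0-based: `(i : ℕ) ≤ k`) and every parameter `t` strictly between
`x i` and the `x`-coordinates of all later vertices: each right edge `{i, j}` that is
among the `k+2−i` (1-based; here `k+1−(i : ℕ)`) topmost or among that many bottommost
right edges at `v i` (measured by the values `e i · t`) is an `m`-edge for some `m ≤ k`;
moreover at least `k+1−(i : ℕ)` of these edges are `(D,D')`-invariant `≤k`-edges, where
`D'` is obtained by deleting the last vertex. -/
theorem topmost_bottommost_right_edges_are_le_k_edges (n : ℕ)
    (D : XMonotoneDrawing n) (hD : D.Semisimple) (k : ℕ) (hk : 2 * k + 3 ≤ n)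
    (i : Fin n) (hi : (i : ℕ) ≤ k)
    (t : ℝ) (ht₁ : D.x i < t) (ht₂ : ∀ m : Fin n, i < m → t < D.x m) :
    (∀ j : Fin n, i < j →
      ({m : Fin n | i < m ∧ D.e i j t < D.e i m t}.ncard < k + 1 - (i : ℕ) ∨
        {m : Fin n | i < m ∧ D.e i m t < D.e i j t}.ncard < k + 1 - (i : ℕ)) →
      ∃ m ≤ k, Sig.IsKEdge D.sig m i j) ∧
    k + 1 - (i : ℕ) ≤
      {j : Fin n | i < j ∧
        ({m : Fin n | i < m ∧ D.e i j t < D.e i m t}.ncard < k + 1 - (i : ℕ) ∨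
          {m : Fin n | i < m ∧ D.e i m t < D.e i j t}.ncard < k + 1 - (i : ℕ)) ∧
        Sig.InvariantLeK D.sig k i j}.ncard := by
  have hf := XMonotoneDrawing.ordersRightEdges_of_crossSet_eq_empty
    (fun j m hij hjm ↦ hD.crossSet_eq_empty_of_right_edges hij (hij.trans hjm) hjm.ne) ht₁ ht₂
  simpa only [topmost, bottommost, Set.mem_union, Set.mem_ofPred_eq, Set.mem_Ioi, ← and_or_left,
    and_imp, and_assoc] using topmost_bottommost_right_edges_are_le_k_edges_general hf
      (k := k) (r := k + 1 - i) (by omega) (by omega)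
end

section
/- Let D be a semisimple x-monotone drawing of K_n, let k be an integer with 0 ≤ k ≤ (n−3)/2, and let D' be the x-monotone drawing of K_{n−1} obtained from D by deleting v_n and its incident edges. Then the number of (D,D')-invariant ≤k-edges satisfies E_{≤k}(D,D') ≥ Σ_{i=1}^{k+1} (k+2−i) = C(k+2, 2). -/
/-!
Order the vertices to the right of `v i` by the heights of their edges just after leaving `v i`. For
such a vertex `v j`, the later vertices above it in this order are exactly those on the left of
`(i, j)`. Hence if fewer than `k + 1 - i` vertices lie above `v j`, or fewer than `k + 1 - i` below
it, then `{i, j}` is a `≤k`-edge, as only `i` vertices precede `v i` (counting from `0`). Since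
`2 * k + 3 ≤ n`, the last vertex has at least `k + 1 - i` vertices above it or at least that many
below it; the `k + 1 - i` extreme ones on that side give `≤k`-edges with the last vertex on their
larger side, so that deleting it does not change their type. Summing over `i` gives the bound.
-/

lemma lt_iff_lt_of_isPreconnected {X Y : Type*} [TopologicalSpace X] [LinearOrder Y]
    [TopologicalSpace Y] [OrderClosedTopology Y] {s : Set X} (hs : IsPreconnected s) {f g : X → Y}
    (hf : ContinuousOn f s) (hg : ContinuousOn g s) (hne : ∀ x ∈ s, f x ≠ g x) {a b : X}
    (ha : a ∈ s) (hb : b ∈ s) : f a < g a ↔ f b < g b := by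
  have lt_of_lt {a b : X} (ha : a ∈ s) (hb : b ∈ s) (hlt : f a < g a) : f b < g b := by
    by_contra! hle
    obtain ⟨x, hx, heq⟩ := hs.intermediate_value₂ ha hb hf hg hlt.le hle
    exact hne x hx heq
  exact ⟨lt_of_lt ha hb, lt_of_lt hb ha⟩

lemma exists_subset_ncard_eq_of_downward_closed {α : Type*} [Finite α] (r : α → α → Prop)
    [IsStrictOrder α r] {s : Set α} (hs : ∀ b ∈ s, ∀ a, r a b → a ∈ s) {c : ℕ} (hc : c ≤ s.ncard) :
    ∃ t ⊆ s, t.ncard = c ∧ ∀ b ∈ t, ∀ a, r a b → a ∈ t := by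
  induction c with
  | zero => exact ⟨∅, s.empty_subset, Set.ncard_empty α, by simp⟩
  | succ c ih =>
    obtain ⟨t, hts, rfl, ht⟩ := ih (by omega)
    obtain ⟨b, ⟨hbs, hbt⟩, hmin⟩ := (Finite.wellFounded_of_trans_of_irrefl r).has_min (s \ t)
      (Set.sdiff_nonempty_of_ncard_lt_ncard hc)
    refine ⟨insert b t, Set.insert_subset hbs hts, Set.ncard_insert_of_notMem hbt, ?_⟩
    rintro b' (rfl | hb') a hab
    · by_contra ha
      exact hmin a ⟨hs b' hbs a hab, fun hat => ha (.inr hat)⟩ hab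
    · exact .inr (ht b' hb' a hab)

lemma exists_ncard_eq_forall_rel_and_ncard_lt {α : Type*} [Finite α] (r : α → α → Prop)
    [IsStrictOrder α r] {b : α} {c : ℕ} (hc : c ≤ {a | r a b}.ncard) :
    ∃ t : Set α, (∀ a ∈ t, r a b) ∧ t.ncard = c ∧ ∀ a ∈ t, {x | r x a}.ncard < c := by
  obtain ⟨t, hts, rfl, ht⟩ := exists_subset_ncard_eq_of_downward_closed r
    (fun _ hb _ hab => trans_of r hab hb) hc
  exact ⟨t, hts, rfl, fun a ha => Set.ncard_lt_ncard
    ⟨fun x hx => ht a ha x hx, fun h => irrefl_of r a (h ha)⟩⟩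

lemma ncard_setOf_prod {α β : Type*} [Fintype α] [Finite β] (p : α → β → Prop) :
    {q : α × β | p q.1 q.2}.ncard = ∑ a, {b | p a b}.ncard := by
  classical
  have := Fintype.ofFinite β
  simp only [Set.ncard_eq_toFinset_card', Set.toFinset_ofPred, Finset.card_filter,
    Fintype.sum_prod_type]

lemma sum_Icc_one_succ_sub_eq_choose (n : ℕ) :
    ∑ i ∈ Finset.Icc 1 n, (n + 1 - i) = (n + 1).choose 2 :=
  calc ∑ i ∈ Finset.Icc 1 n, (n + 1 - i) = ∑ m ∈ Finset.Icc 1 n, m.choose 1 := by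
        apply Finset.sum_nbij' (n + 1 - ·) (n + 1 - ·) <;>
          grind [Nat.choose_one_right]
    _ = (n + 1).choose 2 := Nat.sum_Icc_choose n 1

lemma choose_two_le_sum_fin_sub {k n : ℕ} (hkn : k ≤ n) :
    (k + 1).choose 2 ≤ ∑ i : Fin n, (k - i) :=
  calc (k + 1).choose 2 = ∑ i ∈ Finset.Icc 1 k, (k + 1 - i) :=
        (sum_Icc_one_succ_sub_eq_choose k).symm
    _ = ∑ i ∈ Finset.range k, (k - i) := by
        rw [Finset.range_eq_Ico, ← Finset.Ico_add_one_right_eq_Icc,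
          ← Finset.sum_Ico_add' (fun i => k + 1 - i) 0 k 1]
        simp only [Nat.add_sub_add_right]
    _ ≤ ∑ i ∈ Finset.range n, (k - i) :=
        Finset.sum_le_sum_of_subset (Finset.range_mono hkn)
    _ = ∑ i : Fin n, (k - i) := (Fin.sum_univ_eq_sum_range (k - ·) n).symm

namespace Sig

variable {n : ℕ} {σ : Fin n → Fin n → Fin n → Bool} {i j m : Fin n} {k : ℕ}

/-- The edge `{i, j}` is a `(D, D')`-invariant `k`-edge: it avoids the last vertex and is a
`k`-edge, with the same `k`, both before and after the deletion of the last vertex. This refines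
`Sig.InvariantLeK`, where the two types may differ. -/
def IsInvariantKEdge (σ : Fin n → Fin n → Fin n → Bool) (k : ℕ) (i j : Fin n) : Prop :=
  (j : ℕ) + 1 < n ∧ IsKEdge σ k i j ∧ IsKEdgeRes σ k i j

lemma IsInvariantKEdge.invariantLeK {l : ℕ} (h : IsInvariantKEdge σ l i j) (hl : l ≤ k) :
    InvariantLeK σ k i j :=
  ⟨h.1, ⟨l, hl, h.2.1⟩, ⟨l, hl, h.2.2⟩⟩

/-- The relation `⋖` of `Sig.Below`, restricted to the vertices after `i`. For a semisimple drawing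
it is the order in which the edges to these vertices leave `i`, from bottom to top. -/
def RadialLT (σ : Fin n → Fin n → Fin n → Bool) (i j m : Fin n) : Prop :=
  i < j ∧ i < m ∧ Below σ i j m

instance : Std.Asymm (RadialLT σ i) where
  asymm j m := by
    unfold RadialLT Below
    grind

lemma radialLT_or_radialLT (hij : i < j) (him : i < m) (hjm : j ≠ m) :
    RadialLT σ i j m ∨ RadialLT σ i m j := by
  unfold RadialLT Below
  grind

lemma leftOf_iff_radialLT (hij : i < j) (him : i < m) : LeftOf σ i j m ↔ RadialLT σ i j m := by
  unfold RadialLT Below LeftOf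
  grind

lemma leftCount_le (hij : i < j) : leftCount σ i j ≤ i + {m | RadialLT σ i j m}.ncard :=
  calc leftCount σ i j ≤ (Set.Iio i ∪ {m | RadialLT σ i j m}).ncard := by
        refine Set.ncard_le_ncard fun m hm => ?_
        rcases lt_trichotomy m i with hmi | rfl | him
        · exact .inl hmi
        · simp [LeftOf, hij.not_gt] at hm
        · exact .inr ((leftOf_iff_radialLT hij him).1 hm)
    _ ≤ (Set.Iio i).ncard + {m | RadialLT σ i j m}.ncard := Set.ncard_union_le _ _
    _ = i + {m | RadialLT σ i j m}.ncard := by simp [Set.ncard_eq_toFinset_card']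

lemma le_leftCount_add (hij : i < j) :
    n ≤ leftCount σ i j + i + {m | RadialLT σ i m j}.ncard + 2 := by
  have hcover : (Set.univ : Set (Fin n)) ⊆
      ({m | LeftOf σ i j m} ∪ Set.Iio i ∪ {m | RadialLT σ i m j}) ∪ {i, j} := by
    intro m _
    rcases lt_trichotomy m i with hmi | rfl | him
    · exact .inl (.inl (.inr hmi))
    · exact .inr (.inl rfl)
    · rcases eq_or_ne j m with rfl | hjm
      · exact .inr (.inr rfl)
      · rcases radialLT_or_radialLT (σ := σ) hij him hjm with h | h
        · exact .inl (.inl (.inl ((leftOf_iff_radialLT hij him).2 h)))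
        · exact .inl (.inr h)
  calc n = (Set.univ : Set (Fin n)).ncard := by simp
    _ ≤ _ := Set.ncard_le_ncard hcover
    _ ≤ _ := Set.ncard_union_le _ _
    _ ≤ (leftCount σ i j + (Set.Iio i).ncard + {m | RadialLT σ i m j}.ncard) + 2 := by
        gcongr
        · exact (Set.ncard_union_le _ _).trans (by gcongr; exact Set.ncard_union_le _ _)
        · exact (Set.ncard_pair hij.ne).le
    _ = leftCount σ i j + i + {m | RadialLT σ i m j}.ncard + 2 := by
        simp [Set.ncard_eq_toFinset_card']

section Last

variable {σ : Fin (n + 1) → Fin (n + 1) → Fin (n + 1) → Bool} {i j : Fin (n + 1)}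

lemma leftCountRes_eq_ncard_sdiff :
    leftCountRes σ i j = ({m | LeftOf σ i j m} \ {Fin.last n}).ncard := by
  unfold leftCountRes
  congr 1
  ext m
  simp [← Fin.lt_last_iff_ne_last, Fin.lt_def]

lemma leftCountRes_add_one (h : LeftOf σ i j (Fin.last n)) :
    leftCountRes σ i j + 1 = leftCount σ i j := by
  rw [leftCountRes_eq_ncard_sdiff]
  exact Set.ncard_sdiff_singleton_add_one h

lemma leftCountRes_eq_leftCount (h : ¬LeftOf σ i j (Fin.last n)) :
    leftCountRes σ i j = leftCount σ i j := by
  rw [leftCountRes_eq_ncard_sdiff, leftCount,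
    Set.sdiff_singleton_eq_self (s := {m | LeftOf σ i j m}) h]

lemma exists_isInvariantKEdge_of_radialLT_last (hk : 2 * k + 2 ≤ n)
    (hlast : RadialLT σ i j (Fin.last n)) (hcard : i + {m | RadialLT σ i m j}.ncard ≤ k) :
    ∃ l ≤ k, IsInvariantKEdge σ l i j := by
  have hj : j < Fin.last n := (Fin.le_last j).lt_of_ne (ne_of_irrefl hlast)
  have hres := leftCountRes_add_one ((leftOf_iff_radialLT hlast.1 hlast.2.1).2 hlast)
  have hle := le_leftCount_add (σ := σ) hlast.1
  refine ⟨n + 1 - 2 - leftCount σ i j, by omega, Nat.succ_lt_succ hj, ?_, ?_⟩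
  · unfold IsKEdge
    omega
  · unfold IsKEdgeRes
    omega

lemma exists_isInvariantKEdge_of_last_radialLT (hk : 2 * k + 2 ≤ n)
    (hlast : RadialLT σ i (Fin.last n) j) (hcard : i + {m | RadialLT σ i j m}.ncard ≤ k) :
    ∃ l ≤ k, IsInvariantKEdge σ l i j := by
  have hj : j < Fin.last n := (Fin.le_last j).lt_of_ne (ne_of_irrefl' hlast)
  have hres := leftCountRes_eq_leftCount
    (mt (leftOf_iff_radialLT hlast.2.1 hlast.1).1 (asymm hlast))
  have hle := leftCount_le (σ := σ) hlast.2.1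
  refine ⟨leftCount σ i j, by omega, Nat.succ_lt_succ hj, ?_, ?_⟩
  · unfold IsKEdge
    omega
  · unfold IsKEdgeRes
    omega

lemma le_ncard_isInvariantKEdge [IsTrans (Fin (n + 1)) (RadialLT σ i)] (hk : 2 * k + 2 ≤ n) :
    k + 1 - i ≤ {j | i < j ∧ ∃ l ≤ k, IsInvariantKEdge σ l i j}.ncard := by
  rcases Nat.lt_or_ge k i with hki | hik
  · simp [Nat.sub_eq_zero_of_le hki]
  have hi : i < Fin.last n := Fin.lt_def.2 (by rw [Fin.val_last]; omega)
  have hsides : k + 1 - i ≤ {m | RadialLT σ i m (Fin.last n)}.ncard ∨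
      k + 1 - i ≤ {m | RadialLT σ i (Fin.last n) m}.ncard := by
    have := leftCount_le (σ := σ) hi
    have := le_leftCount_add (σ := σ) hi
    omega
  have : IsStrictOrder (Fin (n + 1)) (RadialLT σ i) := {}
  rcases hsides with hbelow | habove
  · obtain ⟨t, ht, htcard, hlt⟩ := exists_ncard_eq_forall_rel_and_ncard_lt (RadialLT σ i) hbelow
    refine htcard.ge.trans (Set.ncard_le_ncard fun j hj =>
      ⟨(ht j hj).1, exists_isInvariantKEdge_of_radialLT_last hk (ht j hj) ?_⟩)
    have := hlt j hj
    omega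
  · obtain ⟨t, ht, htcard, hlt⟩ :=
      exists_ncard_eq_forall_rel_and_ncard_lt (Function.swap (RadialLT σ i)) habove
    refine htcard.ge.trans (Set.ncard_le_ncard fun j hj =>
      ⟨(ht j hj).2.1, exists_isInvariantKEdge_of_last_radialLT hk (ht j hj) ?_⟩)
    have : {m | RadialLT σ i j m}.ncard < k + 1 - i := hlt j hj
    omega

end Last

end Sig

namespace XMonotoneDrawing

variable {n : ℕ} {D : XMonotoneDrawing n} {i j m : Fin n}

lemma Semisimple.e_ne_e (hD : D.Semisimple) (hij : i < j) (him : i < m) (hjm : j ≠ m) {t : ℝ}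
    (hit : D.x i < t) (htj : t < D.x j) (htm : t < D.x m) : D.e i j t ≠ D.e i m t := by
  intro heq
  have hne : (i, j) ≠ (i, m) := by simpa using hjm
  have hempty : D.crossSet i j i m = ∅ :=
    (Set.ncard_eq_zero (D.cross_finite i j i m hij him hne)).1
      (hD i j i m hij him hne (.inl rfl))
  exact hempty.le ⟨max_lt hit hit, lt_min htj htm, heq⟩

lemma Semisimple.sig_eq_true_iff (hD : D.Semisimple) (hij : i < j) (hjm : j < m) {t : ℝ}
    (hit : D.x i < t) (htj : t < D.x j) : D.sig i j m = true ↔ D.e i j t < D.e i m t := by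
  have him := hij.trans hjm
  have hxjm := D.x_strictMono hjm
  have hne : ∀ s ∈ Set.Icc t (D.x j), D.e i j s ≠ D.e i m s := by
    rintro s ⟨hts, hsj⟩
    rcases hsj.lt_or_eq with hsj | rfl
    · exact hD.e_ne_e hij him hjm.ne (hit.trans_le hts) hsj (hsj.trans hxjm)
    · rw [D.end_right i j hij]
      exact (D.avoid_vertex i j m hij hjm).symm
  have hiff := lt_iff_lt_of_isPreconnected isPreconnected_Icc
    ((D.cont i j hij).mono (Set.Icc_subset_Icc_left hit.le))
    ((D.cont i m him).mono (Set.Icc_subset_Icc hit.le hxjm.le)) hne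
    (Set.right_mem_Icc.2 htj.le) (Set.left_mem_Icc.2 htj.le)
  rw [← hiff, D.end_right i j hij]
  simp [sig]

lemma Semisimple.below_iff (hD : D.Semisimple) (hij : i < j) (him : i < m) {t : ℝ}
    (hit : D.x i < t) (htj : t < D.x j) (htm : t < D.x m) :
    Sig.Below D.sig i j m ↔ D.e i j t < D.e i m t := by
  rcases lt_trichotomy j m with hjm | rfl | hmj
  · simp [Sig.Below, hjm, hjm.not_gt, hD.sig_eq_true_iff hij hjm hit htj]
  · simp [Sig.Below]
  · have hne := hD.e_ne_e him hij hmj.ne hit htm htj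
    simp [Sig.Below, hmj, hmj.not_gt, ← Bool.not_eq_true, hD.sig_eq_true_iff him hmj hit htm,
      hne.symm.le_iff_lt]

lemma Semisimple.isTrans_radialLT (hD : D.Semisimple) (i : Fin n) :
    IsTrans (Fin n) (Sig.RadialLT D.sig i) where
  trans := by
    rintro j l m ⟨hij, hil, hjl⟩ ⟨-, him, hlm⟩
    obtain ⟨t, hit, ht⟩ := exists_between
      (lt_min (D.x_strictMono hij) (lt_min (D.x_strictMono hil) (D.x_strictMono him)))
    obtain ⟨htj, htl, htm⟩ : t < D.x j ∧ t < D.x l ∧ t < D.x m := by simpa using ht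
    refine ⟨hij, him, (hD.below_iff hij him hit htj htm).2 ?_⟩
    exact ((hD.below_iff hij hil hit htj htl).1 hjl).trans
      ((hD.below_iff hil him hit htl htm).1 hlm)

end XMonotoneDrawing

theorem invariant_le_k_edges_lower_bound_general {n k : ℕ} (σ : Fin n → Fin n → Fin n → Bool)
    (hσ : ∀ i, IsTrans (Fin n) (Sig.RadialLT σ i)) (hk : 2 * k + 3 ≤ n) :
    (k + 2).choose 2 ≤
      {p : Fin n × Fin n | p.1 < p.2 ∧ ∃ l ≤ k, Sig.IsInvariantKEdge σ l p.1 p.2}.ncard := by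
  obtain _ | n := n
  · omega
  calc (k + 2).choose 2 ≤ ∑ i : Fin (n + 1), (k + 1 - i) := choose_two_le_sum_fin_sub (by omega)
    _ ≤ ∑ i : Fin (n + 1), {j | i < j ∧ ∃ l ≤ k, Sig.IsInvariantKEdge σ l i j}.ncard :=
        Finset.sum_le_sum fun i _ => Sig.le_ncard_isInvariantKEdge (by omega)
    _ = _ := (ncard_setOf_prod fun i j => i < j ∧ ∃ l ≤ k, Sig.IsInvariantKEdge σ l i j).symm

/-- Let `D` be a semisimple x-monotone drawing of `K n`, let
`0 ≤ k ≤ (n−3)/2` (i.e. `2k + 3 ≤ n`), and let `D'` be obtained from `D` by deleting the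
last vertex. Then the number of `(D,D')`-invariant `≤k`-edges is at least
`Σ_{i=1}^{k+1} (k+2−i) = C(k+2, 2)`. -/
theorem invariant_le_k_edges_lower_bound (n : ℕ) (D : XMonotoneDrawing n)
    (hD : D.Semisimple) (k : ℕ) (hk : 2 * k + 3 ≤ n) :
    (∑ i ∈ Finset.Icc 1 (k + 1), (k + 2 - i)) = (k + 2).choose 2 ∧
    (k + 2).choose 2 ≤
      {p : Fin n × Fin n | p.1 < p.2 ∧ Sig.InvariantLeK D.sig k p.1 p.2}.ncard := by
  refine ⟨sum_Icc_one_succ_sub_eq_choose (k + 1),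
    (invariant_le_k_edges_lower_bound_general D.sig hD.isTrans_radialLT hk).trans ?_⟩
  exact Set.ncard_le_ncard fun p ⟨hp, l, hl, hinv⟩ => ⟨hp, hinv.invariantLeK hl⟩
end
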